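/- Let φ_org and φ_new be LTLf formulas in negation normal form over a set of atoms P, and let A_org and A_new be DFAs over the alphabet 2^P whose accepted words are exactly the finite, possibly empty traces satisfying φ_org and φ_new, respectively. Then for every finite trace h ∈ (2^P)^*, the product DFA (A_org)_h × A_new, where (A_org)_h is the DFA progression of A_org through h, accepts exactly the finite, possibly empty traces satisfying prog(φ_org, h) ∧ φ_new. -/

import Mathlib

inductive LTLf (P : Type) : Type where
  | tt : LTLf P
  | ff : LTLf P
  | atom : P → LTLf P
  | natom : P → LTLf P
  | conj : LTLf P → LTLf P → LTLf P
  | disj : LTLf P → LTLf P → LTLf P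
  | next : LTLf P → LTLf P
  | wnext : LTLf P → LTLf P
  | untl : LTLf P → LTLf P → LTLf P
  | release : LTLf P → LTLf P → LTLf P
  deriving DecidableEq

def LTLf.Sat {P : Type} : List (Set P) → LTLf P → Prop
  | _, .tt => True
  | _, .ff => False
  | [], .atom _ => False
  | w :: _, .atom p => p ∈ w
  | [], .natom _ => False
  | w :: _, .natom p => p ∉ w
  | τ, .conj φ₁ φ₂ => LTLf.Sat τ φ₁ ∧ LTLf.Sat τ φ₂
  | τ, .disj φ₁ φ₂ => LTLf.Sat τ φ₁ ∨ LTLf.Sat τ φ₂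
  | [], .next _ => False
  | _ :: τ, .next φ => τ ≠ [] ∧ LTLf.Sat τ φ
  | [], .wnext _ => True
  | _ :: τ, .wnext φ => τ = [] ∨ LTLf.Sat τ φ
  | [], .untl _ _ => False
  | w :: τ, .untl φ₁ φ₂ =>
      LTLf.Sat (w :: τ) φ₂ ∨ (LTLf.Sat (w :: τ) φ₁ ∧ LTLf.Sat τ (.untl φ₁ φ₂))
  | [], .release _ _ => True
  | w :: τ, .release φ₁ φ₂ =>
      LTLf.Sat (w :: τ) φ₂ ∧ (LTLf.Sat (w :: τ) φ₁ ∨ LTLf.Sat τ (.release φ₁ φ₂))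
termination_by τ φ => (τ.length, sizeOf φ)

open Classical in
noncomputable def LTLf.prog {P : Type} : LTLf P → Set P → LTLf P
  | .tt, _ => .tt
  | .ff, _ => .ff
  | .atom p, w => if p ∈ w then .tt else .ff
  | .natom p, w => if p ∈ w then .ff else .tt
  | .conj φ₁ φ₂, w => .conj (φ₁.prog w) (φ₂.prog w)
  | .disj φ₁ φ₂, w => .disj (φ₁.prog w) (φ₂.prog w)
  | .next φ, _ => .conj φ (.untl .tt .tt)
  | .wnext φ, _ => .disj φ (.release .ff .ff)
  | .untl φ₁ φ₂, w =>
      .disj (φ₂.prog w) (.conj (φ₁.prog w) (.conj (.untl φ₁ φ₂) (.untl .tt .tt)))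
  | .release φ₁ φ₂, w =>
      .conj (φ₂.prog w) (.disj (φ₁.prog w) (.disj (.release φ₁ φ₂) (.release .ff .ff)))

noncomputable def LTLf.progTrace {P : Type} (φ : LTLf P) (h : List (Set P)) : LTLf P :=
  h.foldl LTLf.prog φ

/-- The DFA progression of `A` through the word `h`: same DFA, but with start state
progressed to the state that `A` reaches from its start state on reading `h`. -/
def DFA.progress {α σ : Type*} (A : DFA α σ) (h : List α) : DFA α σ where
  step := A.step
  start := A.evalFrom A.start h
  accept := A.accept

/-- The product of two DFAs over a common alphabet: pairs of states, componentwise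
transitions, pairs of accepting states. -/
def DFA.product {α σ₁ σ₂ : Type*} (A₁ : DFA α σ₁) (A₂ : DFA α σ₂) : DFA α (σ₁ × σ₂) where
  step := fun s a => (A₁.step s.1 a, A₂.step s.2 a)
  start := (A₁.start, A₂.start)
  accept := {s | s.1 ∈ A₁.accept ∧ s.2 ∈ A₂.accept}

/-!
Progression, of formulas as well as of automata, computes the left quotient
`h⁻¹L = {τ | h ++ τ ∈ L}` of the language `L` at hand, and products of automata and conjunctions of
formulas both compute intersections. For formulas the crux is a single letter `w`, where progression
unfolds the expansion laws of `U` and `R`. The guards `tt U tt` and `ff R ff` that it inserts say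
"the rest is nonempty" and "the rest is empty"; under `U` and `R` they are harmless, because no
until formula holds on the empty trace and every release formula does.
-/

namespace LTLf

variable {P : Type} {φ ψ : LTLf P} {τ : List (Set P)}

theorem sat_conj : Sat τ (φ.conj ψ) ↔ Sat τ φ ∧ Sat τ ψ := by
  cases τ <;> simp [Sat]

theorem sat_disj : Sat τ (φ.disj ψ) ↔ Sat τ φ ∨ Sat τ ψ := by
  cases τ <;> simp [Sat]

theorem sat_untl_tt_tt : Sat τ (.untl .tt .tt) ↔ τ ≠ [] := by
  cases τ <;> simp [Sat]

theorem sat_release_ff_ff : Sat τ (.release .ff .ff) ↔ τ = [] := by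
  cases τ <;> simp [Sat]

theorem ne_nil_of_sat_untl (hτ : Sat τ (φ.untl ψ)) : τ ≠ [] := by
  rintro rfl
  simp [Sat] at hτ

theorem sat_release_of_eq_nil (hτ : τ = []) : Sat τ (φ.release ψ) := by
  simp [hτ, Sat]

theorem sat_prog {w : Set P} : Sat τ (φ.prog w) ↔ Sat (w :: τ) φ := by
  induction φ with
  | tt => simp [prog, Sat]
  | ff => simp [prog, Sat]
  | atom p => by_cases hp : p ∈ w <;> simp [prog, Sat, hp]
  | natom p => by_cases hp : p ∈ w <;> simp [prog, Sat, hp]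
  | conj φ ψ ihφ ihψ => simp only [prog, sat_conj, ihφ, ihψ]
  | disj φ ψ ihφ ihψ => simp only [prog, sat_disj, ihφ, ihψ]
  | next φ => simp only [prog, sat_conj, sat_untl_tt_tt, Sat, and_comm]
  | wnext φ => simp only [prog, sat_disj, sat_release_ff_ff, Sat, or_comm]
  | untl φ ψ ihφ ihψ =>
    calc Sat τ ((φ.untl ψ).prog w)
        ↔ Sat (w :: τ) ψ ∨ (Sat (w :: τ) φ ∧ (Sat τ (φ.untl ψ) ∧ τ ≠ [])) := by
          simp only [prog, sat_disj, sat_conj, sat_untl_tt_tt, ihφ, ihψ]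
      _ ↔ Sat (w :: τ) ψ ∨ (Sat (w :: τ) φ ∧ Sat τ (φ.untl ψ)) := by
          rw [and_iff_left_of_imp ne_nil_of_sat_untl]
      _ ↔ Sat (w :: τ) (φ.untl ψ) := by rw [Sat]
  | release φ ψ ihφ ihψ =>
    calc Sat τ ((φ.release ψ).prog w)
        ↔ Sat (w :: τ) ψ ∧ (Sat (w :: τ) φ ∨ (Sat τ (φ.release ψ) ∨ τ = [])) := by
          simp only [prog, sat_disj, sat_conj, sat_release_ff_ff, ihφ, ihψ]
      _ ↔ Sat (w :: τ) ψ ∧ (Sat (w :: τ) φ ∨ Sat τ (φ.release ψ)) := by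
          rw [or_iff_left_of_imp sat_release_of_eq_nil]
      _ ↔ Sat (w :: τ) (φ.release ψ) := by rw [Sat]

/-- The language of an LTLf formula: the finite traces satisfying it, the empty trace included, as
words over the alphabet `Set P`, so that formulas and automata can be compared as languages. -/
def language (φ : LTLf P) : Language (Set P) :=
  {τ | Sat τ φ}

theorem mem_language : τ ∈ φ.language ↔ Sat τ φ :=
  Iff.rfl

theorem language_conj (φ ψ : LTLf P) : (φ.conj ψ).language = φ.language ⊓ ψ.language := by
  ext τ
  simp only [Language.mem_inf, mem_language, sat_conj]

theorem language_prog (φ : LTLf P) (w : Set P) :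
    (φ.prog w).language = φ.language.leftQuotient [w] := by
  ext τ
  exact sat_prog

theorem language_progTrace (φ : LTLf P) (h : List (Set P)) :
    (φ.progTrace h).language = φ.language.leftQuotient h := by
  induction h generalizing φ with
  | nil => rfl
  | cons w h ih =>
    calc (φ.progTrace (w :: h)).language
        = (φ.prog w).language.leftQuotient h := ih (φ.prog w)
      _ = (φ.language.leftQuotient [w]).leftQuotient h := by rw [language_prog]
      _ = φ.language.leftQuotient (w :: h) := (Language.leftQuotient_append _ [w] h).symm

end LTLf

section Automata

universe u v

variable {α : Type u}

theorem dfa_accepts_progress {σ : Type v} (A : DFA α σ) (h : List α) :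
    (A.progress h).accepts = A.accepts.leftQuotient h :=
  (Language.leftQuotient_accepts_apply A h).symm

theorem dfa_product_eq_inter {σ₁ σ₂ : Type v} (A₁ : DFA α σ₁) (A₂ : DFA α σ₂) :
    A₁.product A₂ = A₁.inter A₂ :=
  rfl

end Automata

/-- If A_org and A_new accept exactly the finite (possibly empty) traces
satisfying φ_org and φ_new respectively, then for every finite trace h the product DFA
(A_org)_h × A_new accepts exactly the finite (possibly empty) traces satisfying
prog(φ_org, h) ∧ φ_new. -/
theorem dfa_progress_product_accepts_prog_conj {P : Type} {S₁ S₂ : Type}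
    (φorg φnew : LTLf P) (Aorg : DFA (Set P) S₁) (Anew : DFA (Set P) S₂)
    (horg : ∀ τ : List (Set P), τ ∈ Aorg.accepts ↔ LTLf.Sat τ φorg)
    (hnew : ∀ τ : List (Set P), τ ∈ Anew.accepts ↔ LTLf.Sat τ φnew)
    (h : List (Set P)) :
    ∀ τ : List (Set P), τ ∈ ((Aorg.progress h).product Anew).accepts ↔
      LTLf.Sat τ (LTLf.conj (φorg.progTrace h) φnew) := by
  have accepts_org : Aorg.accepts = φorg.language := Language.ext horg
  have accepts_new : Anew.accepts = φnew.language := Language.ext hnew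
  have accepts_eq : ((Aorg.progress h).product Anew).accepts =
      ((φorg.progTrace h).conj φnew).language := by
    rw [dfa_product_eq_inter, DFA.accepts_inter, dfa_accepts_progress, accepts_org, accepts_new,
      LTLf.language_conj, LTLf.language_progTrace]
  intro τ
  rw [accepts_eq, LTLf.mem_language]
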